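/- Let G be a field, C ⊆ G a subfield, and let q be a prime number different from the characteristic of G. Let w ∈ G be a nonzero element and let v₀ ∈ C be such that both v₀ − w and v₀ − w^{-1} are q-th powers in G. Then for every discrete valuation v on G trivial on C, v(w) ≡ 0 (mod q). -/

import Mathlib

/-! If `v w < 0 ≤ v c`, then `c - w` has the same value as `w`, and the value of an `n`-th power is
an `n`-fold multiple. If `v w > 0`, the same argument applies to `w⁻¹`. -/

theorem addValuation_eq_nsmul_of_pow_eq_sub {R Γ₀ : Type*} [Ring R]
    [LinearOrderedAddCommMonoidWithTop Γ₀] {v : AddValuation R Γ₀} {n : ℕ} {c x y : R}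
    (hlt : v x < v c) (hy : y ^ n = c - x) : v x = n • v y := by
  rw [← v.map_pow, hy, v.map_sub_swap, v.map_sub_eq_of_lt_left hlt]

theorem addValuation_algebraMap_nonneg {C R Γ₀ : Type*} [CommSemiring C] [Ring R] [Algebra C R]
    [LinearOrderedAddCommMonoidWithTop Γ₀] {v : AddValuation R Γ₀} {c : C}
    (hc : c ≠ 0 → v (algebraMap C R c) = 0) : 0 ≤ v (algebraMap C R c) := by
  rcases eq_or_ne c 0 with rfl | hne
  · simp
  · exact (hc hne).ge

theorem exists_coe_eq_and_dvd_of_eq_nsmul {α : Type*} [Semiring α] {a b : WithTop α} {n : ℕ}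
    (ha : a ≠ ⊤) (h : a = n • b) : ∃ z : α, a = z ∧ (n : α) ∣ z := by
  cases b with
  | top =>
    cases n with
    | zero => exact ⟨0, by rw [h, zero_nsmul, WithTop.coe_zero], dvd_zero _⟩
    | succ m => exact absurd (by rw [h, succ_nsmul, WithTop.add_top]) ha
  | coe k => exact ⟨n • k, by rw [h, WithTop.coe_nsmul], k, nsmul_eq_mul n k⟩

theorem stmt_14_general {K Γ₀ : Type*} [DivisionRing K] [LinearOrderedAddCommGroupWithTop Γ₀]
    (v : AddValuation K Γ₀) {n : ℕ} {c w : K} (hc : 0 ≤ v c) (hw : w ≠ 0)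
    (h1 : ∃ y : K, y ^ n = c - w) (h2 : ∃ y : K, y ^ n = c - w⁻¹) :
    ∃ y : K, v w = n • v y := by
  obtain ⟨y₁, hy₁⟩ := h1
  obtain ⟨y₂, hy₂⟩ := h2
  rcases lt_trichotomy (v w) 0 with hneg | hzero | hpos
  · exact ⟨y₁, addValuation_eq_nsmul_of_pow_eq_sub (hneg.trans_le hc) hy₁⟩
  · exact ⟨1, by simp [hzero]⟩
  · have hsum : v w + v w⁻¹ = 0 := by rw [← v.map_mul, mul_inv_cancel₀ hw, v.map_one]
    have hinv : v w⁻¹ < 0 := by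
      by_contra! hnonneg
      exact (add_pos_of_pos_of_nonneg hpos hnonneg).ne' hsum
    have hval : v w⁻¹ = n • v y₂ := addValuation_eq_nsmul_of_pow_eq_sub (hinv.trans_le hc) hy₂
    refine ⟨y₂⁻¹, ?_⟩
    rw [← inv_inv w, v.map_inv, hval, ← v.map_pow, ← v.map_inv, ← inv_pow, v.map_pow]

/-- Lemma `le:forevery`: Let `G` be a field, `C ⊆ G` a subfield, and `q`
a prime number different from the characteristic of `G`.  Let `w ∈ G` be nonzero and let
`v₀ ∈ C` be such that both `v₀ - w` and `v₀ - w⁻¹` are `q`-th powers in `G`.  Then for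
every discrete valuation `v` on `G` trivial on `C`, `v(w) ≡ 0 (mod q)`. -/
theorem stmt_14 (C G : Type*) [Field C] [Field G] [Algebra C G]
    (q : ℕ) (hq : q.Prime) (hchar : (q : G) ≠ 0)
    (w : G) (hw : w ≠ 0) (v₀ : C)
    (h1 : ∃ y : G, y ^ q = algebraMap C G v₀ - w)
    (h2 : ∃ y : G, y ^ q = algebraMap C G v₀ - w⁻¹) :
    ∀ v : AddValuation G (WithTop ℤ),
      (∀ z : ℤ, ∃ x : G, v x = (z : WithTop ℤ)) →
      (∀ c : C, c ≠ 0 → v (algebraMap C G c) = 0) →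
      ∃ z : ℤ, v w = (z : WithTop ℤ) ∧ (q : ℤ) ∣ z := by
  intro v _ hv
  obtain ⟨y, hy⟩ := stmt_14_general v (addValuation_algebraMap_nonneg (hv v₀)) hw h1 h2
  exact exists_coe_eq_and_dvd_of_eq_nsmul (v.ne_top_iff.2 hw) hy
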